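/- For each T ≥ 1 there exists a smooth, radially symmetric function φ_T : ℝ × ℝ² → ℝ solving the linear wave equation ∂_t²φ_T = Δφ_T on ℝ × ℝ², whose initial data (φ_T(0,·), ∂_tφ_T(0,·)) are compactly supported, and for every integer k ≥ 1 a constant c_k > 0 (independent of T) such that for every p ∈ [0,1) and every T ≥ 1: ∫₀^T ∫₀^{2π} ∫₀^1 φ_T(t,r,θ)² dr dθ dt ≥ c_k · T^{2k−1−p} · Σ_{j=0}^{k} ∫_{ℝ²} (1+|x|)^p · (∂_t^j ∂_r^{k−j} φ_T)²(0,x) dx, where ∂_r denotes the radial derivative and φ_T(t,r,θ) denotes φ_T in polar coordinates. In particular, there is no uniform integrated local energy decay estimate of the form ∫₀^∞ ∫₀^{2π} ∫₀^1 φ(t,r,θ)² dr dθ dt ≤ C·∫_{ℝ²} (|∂_tφ|² + |∇φ|²)(0,x) dx valid for all smooth solutions φ of the wave equation on ℝ^{2+1} with compactly supported data. -/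

import Mathlib

open MeasureTheory Real Set

noncomputable section

/-- The point of `ℝ²` with polar coordinates `(r,θ)`. -/
def polarPt (r θ : ℝ) : EuclideanSpace ℝ (Fin 2) :=
  (WithLp.equiv 2 (Fin 2 → ℝ)).symm ![r * Real.cos θ, r * Real.sin θ]

/-- The radial derivative `∂_r g(x) = ⟨x/|x|, ∇g(x)⟩`. -/
def radialDeriv (g : EuclideanSpace ℝ (Fin 2) → ℝ) : EuclideanSpace ℝ (Fin 2) → ℝ :=
  fun x => fderiv ℝ g x (‖x‖⁻¹ • x)

/-- The Euclidean Laplacian on `ℝ²`. -/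
def lap2 (g : EuclideanSpace ℝ (Fin 2) → ℝ) : EuclideanSpace ℝ (Fin 2) → ℝ :=
  fun x => ∑ i : Fin 2,
    fderiv ℝ (fun y => fderiv ℝ g y (EuclideanSpace.single i 1)) x (EuclideanSpace.single i 1)

/-- `ψ` solves the wave equation `∂_t²ψ = Δψ` on `ℝ × ℝ²`. -/
def SolvesWave (ψ : ℝ → EuclideanSpace ℝ (Fin 2) → ℝ) : Prop :=
  ∀ (t : ℝ) (x : EuclideanSpace ℝ (Fin 2)),
    deriv (fun s => deriv (fun s' => ψ s' x) s) t = lap2 (ψ t) x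

/-- The initial data of `ψ` are compactly supported. -/
def CompactData (ψ : ℝ → EuclideanSpace ℝ (Fin 2) → ℝ) : Prop :=
  ∃ K : Set (EuclideanSpace ℝ (Fin 2)), IsCompact K ∧
    ∀ x ∉ K, ψ 0 x = 0 ∧ deriv (fun s => ψ s x) 0 = 0

/-!
Poisson's formula, written as an integral over the upper unit hemisphere in spherical coordinates,
gives the wave `ψ` with data `ψ = 0`, `∂_t ψ = χ` for a cutoff `χ`. It is smooth by differentiation
under the integral sign. It solves the wave equation because `∂_t² ψ - Δψ` is the integral of an
explicit divergence over the parameter rectangle, whose boundary terms cancel. By finite propagation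
speed `ψ(t, x) = t` on `|t| + |x| ≤ 2`, and `ψ` decays like `1 / t` near the origin.

The counterexamples are the dilations `φ_T(t, x) = ψ(t / T, x / T)`. On `0 ≤ t ≤ T`, `|x| ≤ 1` they
equal `t / T`, so their integrated local energy up to time `T` is exactly `2πT / 3`. Derivatives of
order `k` at time zero gain a factor `T⁻ᵏ` and live on the ball of radius `3T`, so their squared
norms weighted by `(1 + |x|)ᵖ` are `O(T^(2 - 2k + p))`, while the energy does not depend on `T`.
-/

open Filter Function
open scoped ContDiff Topology

local notation "ℝ²" => EuclideanSpace ℝ (Fin 2)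

section ParametricIntegral

universe u

variable {P : Type u} {F W : Type*} [NormedAddCommGroup P] [NormedSpace ℝ P]
  [NormedAddCommGroup F] [NormedSpace ℝ F] [NormedAddCommGroup W] [NormedSpace ℝ W] {κ : P → W → F}

theorem contDiff_fderiv_left (hκ : ContDiff ℝ ∞ (uncurry κ)) :
    ContDiff ℝ ∞ (uncurry fun p w => fderiv ℝ (κ · w) p) :=
  ContDiff.fderiv (f := fun (q : P × W) p => κ p q.2)
    (hκ.comp (by fun_prop : ContDiff ℝ ∞ fun q : (P × W) × P => (q.2, q.1.2)))
    contDiff_fst (by simp)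

theorem contDiff_fderiv_left_apply (hκ : ContDiff ℝ ∞ (uncurry κ)) (v : P) :
    ContDiff ℝ ∞ (uncurry fun p w => fderiv ℝ (κ · w) p v) :=
  (contDiff_fderiv_left hκ).clm_apply contDiff_const

variable [FiniteDimensional ℝ P] [MeasurableSpace W] [BorelSpace W] {μ : Measure W}
  [IsLocallyFiniteMeasure μ] {K : Set W}

theorem hasFDerivAt_setIntegral_of_isCompact (hκ : ContDiff ℝ ∞ (uncurry κ)) (hK : IsCompact K)
    (p : P) :
    HasFDerivAt (fun q => ∫ w in K, κ q w ∂μ) (∫ w in K, fderiv ℝ (κ · w) p ∂μ) p := by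
  have hslice (w : W) : Differentiable ℝ (κ · w) :=
    (hκ.comp (contDiff_prodMk_left w)).differentiable (by simp)
  have hκ' : Continuous (uncurry fun p w => fderiv ℝ (κ · w) p) :=
    (contDiff_fderiv_left hκ).continuous
  obtain ⟨C, hC⟩ := ((isCompact_closedBall p 1).prod hK).exists_bound_of_continuousOn
    hκ'.continuousOn
  refine hasFDerivAt_integral_of_dominated_of_fderiv_le (bound := fun _ => C)
    (Metric.closedBall_mem_nhds p one_pos) (Eventually.of_forall fun q => ?_) ?_ ?_
    ((ae_restrict_iff' hK.measurableSet).2 (ae_of_all _ fun w hw q hq => hC (q, w) ⟨hq, hw⟩))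
    (integrableOn_const hK.measure_lt_top.ne)
    (ae_of_all _ fun w q _ => (hslice w q).hasFDerivAt)
  · exact (hκ.continuous.comp (Continuous.prodMk_right q)).continuousOn
      |>.aestronglyMeasurable_of_isCompact hK hK.measurableSet
  · exact (hκ.continuous.comp (Continuous.prodMk_right p)).continuousOn.integrableOn_compact hK
  · exact (hκ'.comp (Continuous.prodMk_right p)).continuousOn
      |>.aestronglyMeasurable_of_isCompact hK hK.measurableSet

theorem fderiv_setIntegral_apply (hκ : ContDiff ℝ ∞ (uncurry κ)) (hK : IsCompact K) (p v : P) :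
    fderiv ℝ (fun q => ∫ w in K, κ q w ∂μ) p v = ∫ w in K, fderiv ℝ (κ · w) p v ∂μ := by
  rw [(hasFDerivAt_setIntegral_of_isCompact hκ hK p).fderiv]
  refine ContinuousLinearMap.integral_apply ?_ v
  exact ((contDiff_fderiv_left hκ).continuous.comp (Continuous.prodMk_right p)).continuousOn
    |>.integrableOn_compact hK

theorem fderiv_fderiv_setIntegral_apply (hκ : ContDiff ℝ ∞ (uncurry κ)) (hK : IsCompact K)
    (p v : P) :
    fderiv ℝ (fun q => fderiv ℝ (fun q' => ∫ w in K, κ q' w ∂μ) q v) p v =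
      ∫ w in K, fderiv ℝ (fun q => fderiv ℝ (κ · w) q v) p v ∂μ := by
  simp only [fderiv_setIntegral_apply hκ hK]
  exact fderiv_setIntegral_apply (κ := fun q w => fderiv ℝ (κ · w) q v)
    (contDiff_fderiv_left_apply hκ v) hK p v

theorem contDiff_setIntegral_of_isCompact {G : Type u} [NormedAddCommGroup G] [NormedSpace ℝ G]
    {κ : P → W → G} (hκ : ContDiff ℝ ∞ (uncurry κ)) (hK : IsCompact K) :
    ContDiff ℝ ∞ fun p => ∫ w in K, κ p w ∂μ := by
  refine contDiff_infty.2 fun n => ?_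
  induction n generalizing G with
  | zero =>
    exact contDiff_zero.2 (continuous_iff_continuousAt.2 fun p =>
      (hasFDerivAt_setIntegral_of_isCompact hκ hK p).continuousAt)
  | succ n ih =>
    push_cast
    have hderiv := hasFDerivAt_setIntegral_of_isCompact (μ := μ) hκ hK
    refine contDiff_succ_iff_fderiv.2 ⟨fun p => (hderiv p).differentiableAt, by simp, ?_⟩
    rw [funext fun p => (hderiv p).fderiv]
    exact ih (contDiff_fderiv_left hκ)

end ParametricIntegral

section Polar

theorem polarPt_apply_zero (r θ : ℝ) : polarPt r θ 0 = r * cos θ := rfl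

theorem polarPt_apply_one (r θ : ℝ) : polarPt r θ 1 = r * sin θ := rfl

theorem smul_polarPt (c r θ : ℝ) : c • polarPt r θ = polarPt (c * r) θ := by
  ext i
  fin_cases i <;> simp [polarPt, mul_assoc]

theorem polarPt_add_pi_div_two (r θ : ℝ) :
    polarPt r (θ + π / 2) = (-(r * sin θ)) • EuclideanSpace.single 0 1 +
      (r * cos θ) • EuclideanSpace.single 1 1 := by
  ext i
  fin_cases i <;> simp [polarPt, cos_add_pi_div_two, sin_add_pi_div_two]

theorem polarPt_eq_add (r θ : ℝ) :
    polarPt r θ = (r * cos θ) • EuclideanSpace.single 0 1 +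
      (r * sin θ) • EuclideanSpace.single 1 1 := by
  ext i
  fin_cases i <;> simp [polarPt]

theorem contDiff_polarPt {n : WithTop ℕ∞} : ContDiff ℝ n (uncurry polarPt) := by
  simp only [uncurry_def, polarPt_eq_add]
  fun_prop

theorem hasDerivAt_polarPt_radius (r θ : ℝ) :
    HasDerivAt (fun s => polarPt s θ) (polarPt 1 θ) r := by
  simpa only [smul_polarPt, mul_one, one_smul, id] using
    (hasDerivAt_id r).smul_const (polarPt 1 θ)

theorem hasDerivAt_polarPt_angle (r θ : ℝ) : HasDerivAt (polarPt r) (polarPt r (θ + π / 2)) θ := by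
  rw [polarPt_add_pi_div_two, funext (polarPt_eq_add r)]
  have hcos := ((hasDerivAt_cos θ).const_mul r).smul_const (EuclideanSpace.single 0 1 : ℝ²)
  have hsin := ((hasDerivAt_sin θ).const_mul r).smul_const (EuclideanSpace.single 1 1 : ℝ²)
  simpa only [mul_neg] using hcos.fun_add hsin

theorem polarPt_periodic (r : ℝ) : Periodic (polarPt r) (2 * π) := fun θ => by
  simp [polarPt]

theorem norm_polarPt_add_sq (r s θ η : ℝ) :
    ‖polarPt r θ + polarPt s η‖ ^ 2 = r ^ 2 + s ^ 2 + 2 * r * s * cos (η - θ) := by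
  simp only [EuclideanSpace.norm_sq_eq, Fin.sum_univ_two, PiLp.add_apply, polarPt_apply_zero,
    polarPt_apply_one, norm_eq_abs, sq_abs, cos_sub]
  linear_combination r ^ 2 * sin_sq_add_cos_sq θ + s ^ 2 * sin_sq_add_cos_sq η

theorem norm_polarPt (r θ : ℝ) : ‖polarPt r θ‖ = |r| := by
  have h := norm_polarPt_add_sq r 0 θ 0
  rw [show polarPt 0 0 = 0 by simp [polarPt_eq_add], add_zero] at h
  rw [← abs_norm, ← sq_eq_sq_iff_abs_eq_abs, h]
  ring

theorem exists_polarPt_norm_eq (x : ℝ²) : ∃ θ, polarPt ‖x‖ θ = x := by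
  have hx : ‖(⟨x 0, x 1⟩ : ℂ)‖ = ‖x‖ := by
    rw [Complex.norm_eq_sqrt_sq_add_sq, EuclideanSpace.norm_eq]; simp
  refine ⟨Complex.arg ⟨x 0, x 1⟩, ?_⟩
  ext i
  fin_cases i
  · simpa [polarPt, hx] using Complex.norm_mul_cos_arg ⟨x 0, x 1⟩
  · simpa [polarPt, hx] using Complex.norm_mul_sin_arg ⟨x 0, x 1⟩

theorem lap2_eq_fderiv_fderiv {g : ℝ² → ℝ} (hg : ContDiff ℝ 2 g) (x : ℝ²) :
    lap2 g x = ∑ i : Fin 2, fderiv ℝ (fderiv ℝ g) x (EuclideanSpace.single i 1)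
      (EuclideanSpace.single i 1) := by
  have hg' : Differentiable ℝ (fderiv ℝ g) :=
    (hg.fderiv_right (m := 1) le_rfl).differentiable one_ne_zero
  refine Finset.sum_congr rfl fun i _ => ?_
  rw [fderiv_clm_apply (hg' x) (differentiableAt_const _)]
  simp

theorem lap2_eq_polar_frame {g : ℝ² → ℝ} (hg : ContDiff ℝ 2 g) (x : ℝ²) (θ : ℝ) :
    lap2 g x = fderiv ℝ (fderiv ℝ g) x (polarPt 1 θ) (polarPt 1 θ) +
      fderiv ℝ (fderiv ℝ g) x (polarPt 1 (θ + π / 2)) (polarPt 1 (θ + π / 2)) := by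
  rw [lap2_eq_fderiv_fderiv hg, Fin.sum_univ_two, polarPt_add_pi_div_two, polarPt_eq_add]
  simp only [map_add, map_smul, add_apply, smul_apply, smul_eq_mul, one_mul]
  set H := fderiv ℝ (fderiv ℝ g) x
  linear_combination (-(H (EuclideanSpace.single 0 1) (EuclideanSpace.single 0 1)
    + H (EuclideanSpace.single 1 1) (EuclideanSpace.single 1 1))) * sin_sq_add_cos_sq θ

end Polar

section SecondDerivatives

theorem deriv_deriv_setIntegral {W F : Type*} [NormedAddCommGroup W] [NormedSpace ℝ W]
    [MeasurableSpace W] [BorelSpace W] {μ : Measure W} [IsLocallyFiniteMeasure μ] {K : Set W}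
    [NormedAddCommGroup F] [NormedSpace ℝ F] {κ : ℝ → W → F}
    (hκ : ContDiff ℝ ∞ (uncurry κ)) (hK : IsCompact K) (t : ℝ) :
    deriv (fun s => deriv (fun s' => ∫ w in K, κ s' w ∂μ) s) t =
      ∫ w in K, deriv (fun s => deriv (κ · w) s) t ∂μ := by
  simpa only [fderiv_apply_one_eq_deriv] using
    fderiv_fderiv_setIntegral_apply (μ := μ) hκ hK t 1

theorem lap2_setIntegral {W : Type*} [NormedAddCommGroup W] [NormedSpace ℝ W]
    [MeasurableSpace W] [BorelSpace W] {μ : Measure W} [IsLocallyFiniteMeasure μ] {K : Set W}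
    {κ : ℝ² → W → ℝ} (hκ : ContDiff ℝ ∞ (uncurry κ)) (hK : IsCompact K) (x : ℝ²) :
    lap2 (fun y => ∫ w in K, κ y w ∂μ) x = ∫ w in K, lap2 (κ · w) x ∂μ := by
  simp only [lap2, fderiv_fderiv_setIntegral_apply hκ hK]
  refine (integral_finsetSum _ fun i _ => ?_).symm
  let e : ℝ² := EuclideanSpace.single i 1
  have hcont : Continuous (uncurry fun y w => fderiv ℝ (fun z => fderiv ℝ (κ · w) z e) y e) :=
    (contDiff_fderiv_left_apply (κ := fun z w => fderiv ℝ (κ · w) z e)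
      (contDiff_fderiv_left_apply hκ e) e).continuous
  exact (hcont.comp (Continuous.prodMk_right x)).continuousOn.integrableOn_compact hK

theorem lap2_const_mul (a : ℝ) (g : ℝ² → ℝ) (x : ℝ²) :
    lap2 (fun y => a * g y) x = a * lap2 g x := by
  have hmul (f : ℝ² → ℝ) (y : ℝ²) : fderiv ℝ (fun z => a * f z) y = a • fderiv ℝ f y :=
    congrFun (fderiv_const_smul_field (f := f) a) y
  simp only [lap2, hmul, smul_apply, smul_eq_mul, Finset.mul_sum]

theorem lap2_comp_add_right (g : ℝ² → ℝ) (v x : ℝ²) :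
    lap2 (fun y => g (y + v)) x = lap2 g (x + v) := by
  simp only [lap2, fderiv_comp_add_right]
  exact Finset.sum_congr rfl fun i _ => by
    rw [fderiv_comp_add_right (f := fun y => fderiv ℝ g y (EuclideanSpace.single i 1))]

theorem hasDerivAt_comp_add_smul {E F : Type*} [NormedAddCommGroup E] [NormedSpace ℝ E]
    [NormedAddCommGroup F] [NormedSpace ℝ F] {h : E → F} (hh : Differentiable ℝ h) (x v : E)
    (t : ℝ) : HasDerivAt (fun s : ℝ => h (x + s • v)) (fderiv ℝ h (x + t • v) v) t := by
  have hline : HasDerivAt (fun s : ℝ => x + s • v) v t := by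
    simpa using ((hasDerivAt_id t).smul_const v).const_add x
  exact (hh _).hasFDerivAt.comp_hasDerivAt t hline

theorem deriv_deriv_mul_comp_add_smul {E : Type*} [NormedAddCommGroup E] [NormedSpace ℝ E]
    {h : E → ℝ} (hh : ContDiff ℝ 2 h) (c : ℝ) (x v : E) (t : ℝ) :
    deriv (fun s => deriv (fun s' => s' * c * h (x + s' • v)) s) t =
      c * (2 * fderiv ℝ h (x + t • v) v + t * fderiv ℝ (fderiv ℝ h) (x + t • v) v v) := by
  have hDh : Differentiable ℝ (fderiv ℝ h) :=
    (hh.fderiv_right (m := 1) le_rfl).differentiable one_ne_zero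
  have hvalue := hasDerivAt_comp_add_smul (hh.differentiable two_ne_zero) x v
  have hslope := hasDerivAt_comp_add_smul (h := fun y => fderiv ℝ h y v) (by fun_prop) x v t
  have hfirst (s : ℝ) : deriv (fun s' => s' * c * h (x + s' • v)) s =
      c * h (x + s • v) + s * c * fderiv ℝ h (x + s • v) v := by
    simpa using (((hasDerivAt_id s).mul_const c).fun_mul (hvalue s)).deriv
  have hsecond := ((hvalue t).const_mul c).fun_add
    (((hasDerivAt_id t).mul_const c).fun_mul hslope)
  rw [funext hfirst]
  refine hsecond.deriv.trans ?_
  rw [fderiv_clm_apply (hDh _) (differentiableAt_const _)]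
  simp only [one_mul, id_eq, fderiv_fun_const, Pi.zero_apply, ContinuousLinearMap.comp_zero,
    zero_add, ContinuousLinearMap.flip_apply]
  ring

end SecondDerivatives

section PoissonFormula

/-- The parameter rectangle of the spherical coordinates
`(α, β) ↦ (sin α cos β, sin α sin β, cos α)` on the closed upper unit hemisphere of `ℝ³`; the
projection of this point to the plane is `polarPt (sin α) β`. -/
def hemisphereRect : Set (ℝ × ℝ) := Icc 0 (π / 2, 2 * π)

/-- Poisson's formula for the solution of the wave equation on `ℝ × ℝ²` with initial data `(0, h)`:
`t` times the average of `h (x + t ω)` over the upper unit hemisphere projected to the plane. The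
spherical coordinates of `hemisphereRect` remove the singular weight `(t² - |y|²)^(-1/2)` of the
usual planar form. -/
def poissonSolution (h : ℝ² → ℝ) (t : ℝ) (x : ℝ²) : ℝ :=
  (2 * π)⁻¹ * ∫ w in hemisphereRect, t * sin w.1 * h (x + t • polarPt (sin w.1) w.2)

theorem isCompact_hemisphereRect : IsCompact hemisphereRect := isCompact_Icc

variable {h : ℝ² → ℝ}

theorem contDiff_poissonIntegrand (hh : ContDiff ℝ ∞ h) :
    ContDiff ℝ ∞ (uncurry fun (q : ℝ × ℝ²) (w : ℝ × ℝ) =>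
      q.1 * sin w.1 * h (q.2 + q.1 • polarPt (sin w.1) w.2)) := by
  have hpt : ContDiff ℝ ∞ fun w : (ℝ × ℝ²) × ℝ × ℝ => polarPt (sin w.2.1) w.2.2 :=
    contDiff_polarPt.comp (by fun_prop :
      ContDiff ℝ ∞ fun w : (ℝ × ℝ²) × ℝ × ℝ => (sin w.2.1, w.2.2))
  unfold uncurry
  fun_prop

theorem contDiff_poissonSolution (hh : ContDiff ℝ ∞ h) :
    ContDiff ℝ ∞ fun q : ℝ × ℝ² => poissonSolution h q.1 q.2 :=
  contDiff_const.mul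
    (contDiff_setIntegral_of_isCompact (contDiff_poissonIntegrand hh) isCompact_hemisphereRect)

theorem deriv_deriv_poissonSolution (hh : ContDiff ℝ ∞ h) (t : ℝ) (x : ℝ²) :
    deriv (fun s => deriv (fun s' => poissonSolution h s' x) s) t =
      (2 * π)⁻¹ * ∫ w in hemisphereRect, sin w.1 *
        (2 * fderiv ℝ h (x + t • polarPt (sin w.1) w.2) (polarPt (sin w.1) w.2) +
          t * fderiv ℝ (fderiv ℝ h) (x + t • polarPt (sin w.1) w.2) (polarPt (sin w.1) w.2)
            (polarPt (sin w.1) w.2)) := by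
  have hκ : ContDiff ℝ ∞ (uncurry fun (s : ℝ) (w : ℝ × ℝ) =>
      s * sin w.1 * h (x + s • polarPt (sin w.1) w.2)) :=
    (contDiff_poissonIntegrand hh).comp
      (by fun_prop : ContDiff ℝ ∞ fun q : ℝ × ℝ × ℝ => ((q.1, x), q.2))
  simp only [poissonSolution, deriv_const_mul_field]
  rw [deriv_deriv_setIntegral hκ isCompact_hemisphereRect]
  simp only [deriv_deriv_mul_comp_add_smul (contDiff_infty.1 hh 2)]

theorem lap2_poissonSolution (hh : ContDiff ℝ ∞ h) (t : ℝ) (x : ℝ²) :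
    lap2 (poissonSolution h t) x = (2 * π)⁻¹ *
      ∫ w in hemisphereRect, t * sin w.1 * lap2 h (x + t • polarPt (sin w.1) w.2) := by
  have hκ : ContDiff ℝ ∞ (uncurry fun (y : ℝ²) (w : ℝ × ℝ) =>
      t * sin w.1 * h (y + t • polarPt (sin w.1) w.2)) :=
    (contDiff_poissonIntegrand hh).comp
      (by fun_prop : ContDiff ℝ ∞ fun q : ℝ² × ℝ × ℝ => ((t, q.1), q.2))
  unfold poissonSolution
  rw [lap2_const_mul, lap2_setIntegral hκ isCompact_hemisphereRect]
  simp only [lap2_const_mul, lap2_comp_add_right h]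

/-- The polar component of the vector field on `hemisphereRect` through which the two sides of the
wave equation for Poisson's formula differ by a divergence. -/
def polarFlux (h : ℝ² → ℝ) (t : ℝ) (x : ℝ²) (w : ℝ × ℝ) : ℝ :=
  cos w.1 * fderiv ℝ h (x + t • polarPt (sin w.1) w.2) (polarPt (sin w.1) w.2)

/-- The azimuthal component of the vector field whose polar component is `polarFlux`. -/
def azimuthalFlux (h : ℝ² → ℝ) (t : ℝ) (x : ℝ²) (w : ℝ × ℝ) : ℝ :=
  fderiv ℝ h (x + t • polarPt (sin w.1) w.2) (polarPt 1 (w.2 + π / 2))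

theorem contDiff_polarPt_sin : ContDiff ℝ ∞ fun w : ℝ × ℝ => polarPt (sin w.1) w.2 :=
  contDiff_polarPt.comp (by fun_prop : ContDiff ℝ ∞ fun w : ℝ × ℝ => (sin w.1, w.2))

theorem contDiff_polarFlux (hh : ContDiff ℝ ∞ h) (t : ℝ) (x : ℝ²) :
    ContDiff ℝ ∞ (polarFlux h t x) := by
  have hDh : ContDiff ℝ ∞ (fderiv ℝ h) := hh.fderiv_right (by simp)
  have hω := contDiff_polarPt_sin
  exact (contDiff_cos.comp contDiff_fst).mul
    ((hDh.comp (contDiff_const.add (hω.const_smul t))).clm_apply hω)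

theorem contDiff_azimuthalFlux (hh : ContDiff ℝ ∞ h) (t : ℝ) (x : ℝ²) :
    ContDiff ℝ ∞ (azimuthalFlux h t x) := by
  have hDh : ContDiff ℝ ∞ (fderiv ℝ h) := hh.fderiv_right (by simp)
  have he : ContDiff ℝ ∞ fun w : ℝ × ℝ => polarPt 1 (w.2 + π / 2) :=
    contDiff_polarPt.comp (by fun_prop : ContDiff ℝ ∞ fun w : ℝ × ℝ => ((1 : ℝ), w.2 + π / 2))
  exact (hDh.comp (contDiff_const.add (contDiff_polarPt_sin.const_smul t))).clm_apply he

theorem hasDerivAt_polarFlux (hh : ContDiff ℝ ∞ h) (t : ℝ) (x : ℝ²) (α β : ℝ) :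
    HasDerivAt (fun a => polarFlux h t x (a, β))
      ((cos α ^ 2 - sin α ^ 2) * fderiv ℝ h (x + t • polarPt (sin α) β) (polarPt 1 β) +
        t * sin α * cos α ^ 2 * fderiv ℝ (fderiv ℝ h) (x + t • polarPt (sin α) β)
          (polarPt 1 β) (polarPt 1 β)) α := by
  have hω : HasDerivAt (fun a => polarPt (sin a) β) (cos α • polarPt 1 β) α :=
    (hasDerivAt_polarPt_radius (sin α) β).scomp α (hasDerivAt_sin α)
  have hDh : HasDerivAt (fun a => fderiv ℝ h (x + t • polarPt (sin a) β))
      (fderiv ℝ (fderiv ℝ h) (x + t • polarPt (sin α) β) (t • cos α • polarPt 1 β)) α :=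
    (((hh.fderiv_right (m := ∞) (by simp)).differentiable (by simp)) _).hasFDerivAt
      |>.comp_hasDerivAt α ((hω.const_smul t).const_add x)
  convert! (hasDerivAt_cos α).mul (hDh.clm_apply hω) using 1
  have hpt : polarPt (sin α) β = sin α • polarPt 1 β := by rw [smul_polarPt, mul_one]
  simp only [hpt, map_smul, smul_apply, smul_eq_mul]
  ring

theorem hasDerivAt_azimuthalFlux (hh : ContDiff ℝ ∞ h) (t : ℝ) (x : ℝ²) (α β : ℝ) :
    HasDerivAt (fun b => azimuthalFlux h t x (α, b))
      (t * sin α * fderiv ℝ (fderiv ℝ h) (x + t • polarPt (sin α) β) (polarPt 1 (β + π / 2))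
          (polarPt 1 (β + π / 2)) -
        fderiv ℝ h (x + t • polarPt (sin α) β) (polarPt 1 β)) β := by
  have hDh : HasDerivAt (fun b => fderiv ℝ h (x + t • polarPt (sin α) b))
      (fderiv ℝ (fderiv ℝ h) (x + t • polarPt (sin α) β)
        (t • polarPt (sin α) (β + π / 2))) β :=
    (((hh.fderiv_right (m := ∞) (by simp)).differentiable (by simp)) _).hasFDerivAt
      |>.comp_hasDerivAt β (((hasDerivAt_polarPt_angle (sin α) β).const_smul t).const_add x)
  have he : HasDerivAt (fun b => polarPt 1 (b + π / 2)) (-polarPt 1 β) β := by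
    have hneg : polarPt 1 (β + π / 2 + π / 2) = -polarPt 1 β := by
      rw [add_assoc, add_halves]
      simp [polarPt_eq_add, cos_add_pi, sin_add_pi, add_comm]
    rw [← hneg]
    exact (hasDerivAt_polarPt_angle 1 (β + π / 2)).comp_add_const β (π / 2)
  convert! hDh.clm_apply he using 1
  have hpt : polarPt (sin α) (β + π / 2) = sin α • polarPt 1 (β + π / 2) := by
    rw [smul_polarPt, mul_one]
  simp only [hpt, map_smul, map_neg, smul_apply, smul_eq_mul]
  ring

theorem fderiv_polarFlux_add_fderiv_azimuthalFlux (hh : ContDiff ℝ ∞ h) (t : ℝ) (x : ℝ²)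
    (w : ℝ × ℝ) :
    fderiv ℝ (polarFlux h t x) w (1, 0) + fderiv ℝ (azimuthalFlux h t x) w (0, 1) =
      t * sin w.1 * lap2 h (x + t • polarPt (sin w.1) w.2) - sin w.1 *
        (2 * fderiv ℝ h (x + t • polarPt (sin w.1) w.2) (polarPt (sin w.1) w.2) +
          t * fderiv ℝ (fderiv ℝ h) (x + t • polarPt (sin w.1) w.2) (polarPt (sin w.1) w.2)
            (polarPt (sin w.1) w.2)) := by
  have hf := (contDiff_polarFlux hh t x).differentiable (by simp) w
  have hg := (contDiff_azimuthalFlux hh t x).differentiable (by simp) w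
  have hpolar := hf.hasFDerivAt.comp_hasDerivAt (f := fun a => (a, w.2)) w.1
    ((hasDerivAt_id w.1).prodMk (hasDerivAt_const w.1 w.2))
  have hazim := hg.hasFDerivAt.comp_hasDerivAt (f := fun b => (w.1, b)) w.2
    ((hasDerivAt_const w.2 w.1).prodMk (hasDerivAt_id w.2))
  rw [hpolar.unique (hasDerivAt_polarFlux hh t x w.1 w.2),
    hazim.unique (hasDerivAt_azimuthalFlux hh t x w.1 w.2),
    lap2_eq_polar_frame (contDiff_infty.1 hh 2) _ w.2]
  set y := x + t • polarPt (sin w.1) w.2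
  have hpt : polarPt (sin w.1) w.2 = sin w.1 • polarPt 1 w.2 := by rw [smul_polarPt, mul_one]
  simp only [hpt, map_smul, smul_apply, smul_eq_mul]
  linear_combination (fderiv ℝ h y (polarPt 1 w.2) + t * sin w.1 *
    fderiv ℝ (fderiv ℝ h) y (polarPt 1 w.2) (polarPt 1 w.2)) * sin_sq_add_cos_sq w.1

theorem integral_fderiv_polarFlux_add_fderiv_azimuthalFlux (hh : ContDiff ℝ ∞ h) (t : ℝ) (x : ℝ²) :
    ∫ w in hemisphereRect, (fderiv ℝ (polarFlux h t x) w (1, 0) +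
      fderiv ℝ (azimuthalFlux h t x) w (0, 1)) = 0 := by
  have hf := contDiff_polarFlux hh t x
  have hg := contDiff_azimuthalFlux hh t x
  have hcont : Continuous fun w => fderiv ℝ (polarFlux h t x) w (1, 0) +
      fderiv ℝ (azimuthalFlux h t x) w (0, 1) :=
    ((hf.continuous_fderiv (by simp)).clm_apply continuous_const).add
      ((hg.continuous_fderiv (by simp)).clm_apply continuous_const)
  have hrect : (0 : ℝ × ℝ) ≤ (π / 2, 2 * π) := ⟨by positivity, by positivity⟩
  refine (integral_divergence_prod_Icc_of_hasFDerivAt_of_le _ _ _ _ 0 (π / 2, 2 * π) hrect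
    hf.continuous.continuousOn hg.continuous.continuousOn
    (fun w _ => (hf.differentiable (by simp) w).hasFDerivAt)
    (fun w _ => (hg.differentiable (by simp) w).hasFDerivAt)
    (hcont.continuousOn.integrableOn_compact isCompact_Icc)).trans ?_
  have hperiod (α : ℝ) : azimuthalFlux h t x (α, 2 * π) = azimuthalFlux h t x (α, 0) := by
    simp only [azimuthalFlux, add_comm (2 * π), polarPt_periodic _ (π / 2), zero_add,
      (polarPt_periodic (sin α)).eq]
  have hequator (β : ℝ) : polarFlux h t x (π / 2, β) = 0 := by simp [polarFlux]
  have hpole (β : ℝ) : polarFlux h t x (0, β) = 0 := by simp [polarFlux, polarPt_eq_add]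
  simp [hperiod, hequator, hpole]

theorem solvesWave_poissonSolution (hh : ContDiff ℝ ∞ h) : SolvesWave (poissonSolution h) := by
  intro t x
  have hω := contDiff_polarPt_sin.continuous
  have hDh : ContDiff ℝ ∞ (fderiv ℝ h) := hh.fderiv_right (by simp)
  have hD2h : Continuous (fderiv ℝ (fderiv ℝ h)) := hDh.continuous_fderiv (by simp)
  have hlap : Continuous (lap2 h) := by
    rw [funext (lap2_eq_fderiv_fderiv (contDiff_infty.1 hh 2))]
    fun_prop
  have hdiv := integral_fderiv_polarFlux_add_fderiv_azimuthalFlux hh t x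
  simp only [fderiv_polarFlux_add_fderiv_azimuthalFlux hh] at hdiv
  rw [integral_sub, sub_eq_zero] at hdiv
  · rw [deriv_deriv_poissonSolution hh, lap2_poissonSolution hh, hdiv]
  all_goals
    refine Continuous.continuousOn ?_ |>.integrableOn_compact isCompact_hemisphereRect
    fun_prop

theorem norm_smul_polarPt_sin_le (t : ℝ) (w : ℝ × ℝ) : ‖t • polarPt (sin w.1) w.2‖ ≤ |t| := by
  rw [smul_polarPt, norm_polarPt, abs_mul]
  exact mul_le_of_le_one_right (abs_nonneg t) (abs_sin_le_one w.1)

theorem poissonSolution_eq_zero {R t : ℝ} {x : ℝ²} (hR : ∀ y, R ≤ ‖y‖ → h y = 0)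
    (htx : |t| + R ≤ ‖x‖) : poissonSolution h t x = 0 := by
  have hzero (w : ℝ × ℝ) : h (x + t • polarPt (sin w.1) w.2) = 0 := by
    refine hR _ ?_
    have hsub := norm_sub_le (x + t • polarPt (sin w.1) w.2) (t • polarPt (sin w.1) w.2)
    rw [add_sub_cancel_right] at hsub
    linarith [norm_smul_polarPt_sin_le t w]
  simp [poissonSolution, hzero]

theorem integral_sin_fst_hemisphereRect : ∫ w in hemisphereRect, sin w.1 = 2 * π := by
  have hsin : ∫ α in Icc 0 (π / 2), sin α = 1 := by
    rw [integral_Icc_eq_integral_Ioc, ← intervalIntegral.integral_of_le (by positivity)]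
    simp
  have hprod := setIntegral_prod_mul (μ := volume) (ν := volume) sin (fun _ => (1 : ℝ))
    (Icc 0 (π / 2)) (Icc 0 (2 * π))
  rw [Icc_prod_Icc] at hprod
  simpa [hsin, pi_nonneg, hemisphereRect, ← Prod.zero_eq_mk, ← Measure.volume_eq_prod] using hprod

theorem poissonSolution_eq_self {ρ t : ℝ} {x : ℝ²} (hρ : ∀ y, ‖y‖ ≤ ρ → h y = 1)
    (htx : |t| + ‖x‖ ≤ ρ) : poissonSolution h t x = t := by
  have hone (w : ℝ × ℝ) : h (x + t • polarPt (sin w.1) w.2) = 1 :=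
    hρ _ (by linarith [norm_add_le x (t • polarPt (sin w.1) w.2), norm_smul_polarPt_sin_le t w])
  simp only [poissonSolution, hone, mul_one, integral_const_mul, integral_sin_fst_hemisphereRect]
  field_simp

theorem integral_comp_norm_add_polarPt {H : ℝ → ℝ} (x : ℝ²) (s : ℝ) :
    ∫ β in Icc 0 (2 * π), H ‖x + polarPt s β‖ =
      ∫ β in Icc 0 (2 * π), H ‖polarPt ‖x‖ 0 + polarPt s β‖ := by
  obtain ⟨θ, hθ⟩ := exists_polarPt_norm_eq x
  have hshift (β : ℝ) : ‖x + polarPt s β‖ = ‖polarPt ‖x‖ 0 + polarPt s (β - θ)‖ := by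
    rw [← sq_eq_sq₀ (norm_nonneg _) (norm_nonneg _), norm_polarPt_add_sq, sub_zero]
    nth_rw 1 [← hθ]
    exact norm_polarPt_add_sq _ _ _ _
  have hper : Periodic (fun β => H ‖polarPt ‖x‖ 0 + polarPt s β‖) (2 * π) := fun β => by
    simp only [polarPt_periodic s β]
  simp only [hshift, integral_Icc_eq_integral_Ioc,
    ← intervalIntegral.integral_of_le two_pi_pos.le]
  rw [intervalIntegral.integral_comp_sub_right (fun β => H ‖polarPt ‖x‖ 0 + polarPt s β‖) θ]
  have h := hper.intervalIntegral_add_eq (0 - θ) 0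
  rwa [zero_add, show 0 - θ + 2 * π = 2 * π - θ by ring] at h

theorem poissonSolution_radial (hh : Continuous h) {H : ℝ → ℝ} (hH : ∀ y, h y = H ‖y‖) (t : ℝ)
    (x : ℝ²) : poissonSolution h t x = poissonSolution h t (polarPt ‖x‖ 0) := by
  have hω := contDiff_polarPt_sin.continuous
  have hiterated (y : ℝ²) : poissonSolution h t y = (2 * π)⁻¹ * ∫ α in Icc 0 (π / 2),
      t * sin α * ∫ β in Icc 0 (2 * π), H ‖y + polarPt (t * sin α) β‖ := by
    have hint : IntegrableOn (fun w : ℝ × ℝ => t * sin w.1 * h (y + t • polarPt (sin w.1) w.2))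
        (Icc 0 (π / 2) ×ˢ Icc 0 (2 * π)) := by
      refine Continuous.continuousOn ?_ |>.integrableOn_compact (isCompact_Icc.prod isCompact_Icc)
      fun_prop
    rw [poissonSolution, hemisphereRect, Prod.zero_eq_mk, ← Icc_prod_Icc, Measure.volume_eq_prod,
      setIntegral_prod _ hint]
    simp only [integral_const_mul, hH, smul_polarPt]
  rw [hiterated, hiterated]
  simp only [integral_comp_norm_add_polarPt x]

theorem apply_add_smul_polarPt_eq_zero {R t : ℝ} {x : ℝ²} (hR : ∀ y, R ≤ ‖y‖ → h y = 0) {w : ℝ × ℝ}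
    (hw : R + ‖x‖ ≤ t * sin w.1) : h (x + t • polarPt (sin w.1) w.2) = 0 := by
  refine hR _ ?_
  have htri := norm_sub_le (x + t • polarPt (sin w.1) w.2) x
  rw [add_sub_cancel_left, smul_polarPt, norm_polarPt, ← smul_polarPt] at htri
  linarith [le_abs_self (t * sin w.1)]

/-- For data supported in the ball of radius `R` only the polar cap `t sin α < R + ‖x‖` of the
hemisphere contributes, which Jordan's inequality `2 α / π ≤ sin α` turns into a bound on `α`. -/
theorem poissonSolution_eq_setIntegral_cap {R t : ℝ} {x : ℝ²} (hR : ∀ y, R ≤ ‖y‖ → h y = 0)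
    (hRx : 0 < R + ‖x‖) (ht : R + ‖x‖ ≤ t) :
    poissonSolution h t x = (2 * π)⁻¹ * ∫ w in Icc 0 (π * (R + ‖x‖) / (2 * t), 2 * π),
      t * sin w.1 * h (x + t • polarPt (sin w.1) w.2) := by
  have ht₀ : 0 < t := hRx.trans_le ht
  set a := π * (R + ‖x‖) / (2 * t)
  have ha : a ≤ π / 2 := by
    rw [div_le_div_iff₀ (by positivity) two_pos]
    nlinarith [mul_le_mul_of_nonneg_left ht pi_nonneg]
  have hsub : Icc 0 (a, 2 * π) ⊆ hemisphereRect := Icc_subset_Icc_right ⟨ha, le_rfl⟩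
  refine congrArg _ (setIntegral_eq_of_subset_of_forall_sdiff_eq_zero
    isCompact_hemisphereRect.measurableSet hsub ?_)
  rintro ⟨α, β⟩ ⟨⟨hw₀, hw₁⟩, hw⟩
  have haα : a < α := by
    by_contra! hα
    exact hw ⟨hw₀, hα, hw₁.2⟩
  have hsin : 2 / π * a ≤ sin α :=
    (mul_le_mul_of_nonneg_left haα.le (by positivity)).trans (mul_le_sin hw₀.1 hw₁.1)
  rw [apply_add_smul_polarPt_eq_zero hR, mul_zero]
  calc R + ‖x‖ = t * (2 / π * a) := by simp only [a]; field_simp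
    _ ≤ t * sin α := mul_le_mul_of_nonneg_left hsin ht₀.le

theorem abs_poissonSolution_le {R B t : ℝ} {x : ℝ²} (hR : ∀ y, R ≤ ‖y‖ → h y = 0)
    (hB : ∀ y, |h y| ≤ B) (hRx : 0 < R + ‖x‖) (ht : R + ‖x‖ ≤ t) :
    |poissonSolution h t x| ≤ π * B * (R + ‖x‖) ^ 2 / (2 * t) := by
  rw [poissonSolution_eq_setIntegral_cap hR hRx ht, abs_mul, abs_of_pos (by positivity)]
  have ht₀ : 0 < t := hRx.trans_le ht
  have hB₀ : 0 ≤ B := (abs_nonneg _).trans (hB 0)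
  set a := π * (R + ‖x‖) / (2 * t) with ha
  have hbound : ∀ w ∈ Icc (0 : ℝ × ℝ) (a, 2 * π),
      ‖t * sin w.1 * h (x + t • polarPt (sin w.1) w.2)‖ ≤ (R + ‖x‖) * B := by
    intro w hw
    rcases le_total (R + ‖x‖) (t * sin w.1) with hw' | hw'
    · rw [apply_add_smul_polarPt_eq_zero hR hw', mul_zero, norm_zero]
      positivity
    · have ha' : a ≤ π := by
        rw [div_le_iff₀ (by positivity)]
        nlinarith [mul_le_mul_of_nonneg_left ht pi_nonneg, mul_pos pi_pos ht₀]
      have hsin : 0 ≤ t * sin w.1 :=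
        mul_nonneg ht₀.le (sin_nonneg_of_nonneg_of_le_pi hw.1.1 (hw.2.1.trans ha'))
      rw [norm_mul, norm_of_nonneg hsin]
      exact mul_le_mul hw' (hB _) (abs_nonneg _) hRx.le
  have hvol : volume.real (Icc (0 : ℝ × ℝ) (a, 2 * π)) = a * (2 * π) := by
    rw [Prod.zero_eq_mk, ← Icc_prod_Icc, Measure.volume_eq_prod, measureReal_prod_prod]
    simp [pi_nonneg, show 0 ≤ a by positivity]
  calc (2 * π)⁻¹ * |∫ w in Icc (0 : ℝ × ℝ) (a, 2 * π),
          t * sin w.1 * h (x + t • polarPt (sin w.1) w.2)|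
      ≤ (2 * π)⁻¹ * ((R + ‖x‖) * B * volume.real (Icc (0 : ℝ × ℝ) (a, 2 * π))) :=
        mul_le_mul_of_nonneg_left (norm_setIntegral_le_of_norm_le_const
          isCompact_Icc.measure_lt_top hbound) (by positivity)
    _ = π * B * (R + ‖x‖) ^ 2 / (2 * t) := by
      rw [hvol, ha]
      field_simp

end PoissonFormula

section RadialProfile

/-- The profile of a radially symmetric function `ψ` on `ℝ × ℝ²`, extended evenly to negative
radii so that it inherits the smoothness of `ψ`. Radial symmetry of `ψ` is expressed as
`ψ t x = radialProfile ψ t ‖x‖`. -/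
def radialProfile (ψ : ℝ → ℝ² → ℝ) (t r : ℝ) : ℝ := ψ t (polarPt r 0)

/-- The initial value of `∂_t^j ∂_r^m ψ`. -/
def initialDeriv (ψ : ℝ → ℝ² → ℝ) (j m : ℕ) (x : ℝ²) : ℝ :=
  deriv^[j] (fun t => radialDeriv^[m] (ψ t) x) 0

theorem contDiff_deriv_iterate_left {f : ℝ → ℝ → ℝ} (hf : ContDiff ℝ ∞ (uncurry f)) (m : ℕ) :
    ContDiff ℝ ∞ (uncurry fun t r => deriv^[m] (f · r) t) := by
  induction m with
  | zero => exact hf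
  | succ m ih =>
    simpa only [iterate_succ_apply', fderiv_apply_one_eq_deriv] using
      contDiff_fderiv_left_apply ih 1

theorem contDiff_deriv_iterate_right {f : ℝ → ℝ → ℝ} (hf : ContDiff ℝ ∞ (uncurry f)) (m : ℕ) :
    ContDiff ℝ ∞ (uncurry fun t r => deriv^[m] (f t) r) :=
  (contDiff_deriv_iterate_left (f := fun r t => f t r)
    (hf.comp (contDiff_snd.prodMk contDiff_fst)) m).comp (contDiff_snd.prodMk contDiff_fst)

theorem deriv_iterate_eq_zero {f : ℝ → ℝ} {t : ℝ} (hf : f =ᶠ[𝓝 t] 0) (m : ℕ) :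
    deriv^[m] f t = 0 := by
  rw [← iteratedDeriv_eq_iterate, hf.iteratedDeriv_eq m]
  simp

theorem radialDeriv_comp_norm {f : ℝ → ℝ} {x : ℝ²} (hf : DifferentiableAt ℝ f ‖x‖) (hx : x ≠ 0) :
    radialDeriv (fun y => f ‖y‖) x = deriv f ‖x‖ := by
  have hnorm : DifferentiableAt ℝ (fun y : ℝ² => ‖y‖) x := differentiableAt_id.norm ℝ hx
  have hradial : fderiv ℝ (fun y : ℝ² => ‖y‖) x (‖x‖⁻¹ • x) = 1 := by
    rw [map_smul, hnorm.fderiv_norm_self, smul_eq_mul, inv_mul_cancel₀ (norm_ne_zero_iff.2 hx)]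
  rw [radialDeriv, fderiv_fun_comp x hf hnorm, ContinuousLinearMap.comp_apply, hradial,
    fderiv_apply_one_eq_deriv]

theorem radialDeriv_iterate_comp_norm {f : ℝ → ℝ} (hf : ContDiff ℝ ∞ f) (m : ℕ) {x : ℝ²}
    (hx : x ≠ 0) : radialDeriv^[m] (fun y => f ‖y‖) x = deriv^[m] f ‖x‖ := by
  induction m generalizing x with
  | zero => rfl
  | succ m ih =>
    have hnear : radialDeriv^[m] (fun y => f ‖y‖) =ᶠ[𝓝 x] fun y => deriv^[m] f ‖y‖ := by
      filter_upwards [isOpen_ne.mem_nhds hx] with y hy using ih hy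
    rw [iterate_succ_apply', iterate_succ_apply',
      ← radialDeriv_comp_norm ((hf.iterate_deriv m).differentiable (by simp) _) hx, radialDeriv,
      radialDeriv, hnear.fderiv_eq]

variable {ψ : ℝ → ℝ² → ℝ}

theorem contDiff_radialProfile (hψ : ContDiff ℝ ∞ fun q : ℝ × ℝ² => ψ q.1 q.2) :
    ContDiff ℝ ∞ (uncurry (radialProfile ψ)) :=
  hψ.comp (contDiff_fst.prodMk
    (contDiff_polarPt.comp (by fun_prop : ContDiff ℝ ∞ fun q : ℝ × ℝ => (q.2, (0 : ℝ)))))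

theorem initialDeriv_eq_radialProfile (hψ : ContDiff ℝ ∞ fun q : ℝ × ℝ² => ψ q.1 q.2)
    (hrad : ∀ t x, ψ t x = radialProfile ψ t ‖x‖) (j m : ℕ) {x : ℝ²} (hx : x ≠ 0) :
    initialDeriv ψ j m x = deriv^[j] (fun t => deriv^[m] (radialProfile ψ t) ‖x‖) 0 := by
  have hslice (t : ℝ) : radialDeriv^[m] (ψ t) x = deriv^[m] (radialProfile ψ t) ‖x‖ := by
    rw [funext (hrad t)]
    exact radialDeriv_iterate_comp_norm
      ((contDiff_radialProfile hψ).comp (contDiff_prodMk_right t)) m hx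
  rw [initialDeriv, funext hslice]

theorem deriv_iterate_radialProfile_eq_zero {R : ℝ}
    (hsupp : ∀ t x, |t| + R ≤ ‖x‖ → ψ t x = 0) (j m : ℕ) {r : ℝ} (hr : R < r) :
    deriv^[j] (fun t => deriv^[m] (radialProfile ψ t) r) 0 = 0 := by
  have hnear : ∀ᶠ t : ℝ in 𝓝 0, |t| + R < r :=
    (by fun_prop : Continuous fun t : ℝ => |t| + R).continuousAt.eventually_lt_const (by simpa)
  refine deriv_iterate_eq_zero (hnear.mono fun t ht => deriv_iterate_eq_zero ?_ m) j
  filter_upwards [eventually_gt_nhds ht] with s hs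
  exact hsupp t _ (by rw [norm_polarPt]; exact hs.le.trans (le_abs_self s))

theorem initialDeriv_eq_zero (hψ : ContDiff ℝ ∞ fun q : ℝ × ℝ² => ψ q.1 q.2)
    (hrad : ∀ t x, ψ t x = radialProfile ψ t ‖x‖) {R : ℝ} (hR : 0 ≤ R)
    (hsupp : ∀ t x, |t| + R ≤ ‖x‖ → ψ t x = 0) (j m : ℕ) {x : ℝ²} (hx : R < ‖x‖) :
    initialDeriv ψ j m x = 0 := by
  rw [initialDeriv_eq_radialProfile hψ hrad j m (norm_pos_iff.1 (hR.trans_lt hx)),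
    deriv_iterate_radialProfile_eq_zero hsupp j m hx]

theorem integrable_sq_initialDeriv (hψ : ContDiff ℝ ∞ fun q : ℝ × ℝ² => ψ q.1 q.2)
    (hrad : ∀ t x, ψ t x = radialProfile ψ t ‖x‖) {R : ℝ}
    (hsupp : ∀ t x, |t| + R ≤ ‖x‖ → ψ t x = 0) (j m : ℕ) :
    Integrable fun x => initialDeriv ψ j m x ^ 2 := by
  set D : ℝ → ℝ := fun r => deriv^[j] (fun t => deriv^[m] (radialProfile ψ t) r) 0
  have hD : Continuous D := ((contDiff_deriv_iterate_left
    (contDiff_deriv_iterate_right (contDiff_radialProfile hψ) m) j).continuous.comp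
      (Continuous.prodMk_right 0) :)
  have hDsupp : HasCompactSupport fun x : ℝ² => D ‖x‖ ^ 2 := by
    refine HasCompactSupport.intro (isCompact_closedBall 0 R) fun x hx => ?_
    rw [mem_closedBall_zero_iff, not_le] at hx
    simp only [D, deriv_iterate_radialProfile_eq_zero hsupp j m hx, ne_eq, two_ne_zero,
      not_false_eq_true, zero_pow]
  refine ((hD.comp continuous_norm).pow 2 |>.integrable_of_hasCompactSupport hDsupp).congr ?_
  filter_upwards [compl_mem_ae_iff.2 (measure_singleton (0 : ℝ²))] with x hx
  simp only [initialDeriv_eq_radialProfile hψ hrad j m hx, Pi.pow_apply, comp_apply, D]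

end RadialProfile

section Rescaling

/-- The dilation of a function on `ℝ × ℝ²` to the length and time scale `T`. -/
def rescale (T : ℝ) (ψ : ℝ → ℝ² → ℝ) : ℝ → ℝ² → ℝ := fun t x => ψ (T⁻¹ * t) (T⁻¹ • x)

theorem norm_inv_smul_le_one {E : Type*} [SeminormedAddCommGroup E] [NormedSpace ℝ E] {T : ℝ}
    (hT : 1 ≤ T) {x : E} (hx : ‖x‖ ≤ 1) : ‖T⁻¹ • x‖ ≤ 1 := by
  rw [norm_smul, norm_inv, norm_of_nonneg (zero_le_one.trans hT)]
  exact mul_le_one₀ (inv_le_one_of_one_le₀ hT) (norm_nonneg x) hx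

theorem fderiv_const_mul_comp_smul {E : Type*} [NormedAddCommGroup E] [NormedSpace ℝ E]
    (a c : ℝ) (g : E → ℝ) (x : E) :
    fderiv ℝ (fun y => a * g (c • y)) x = (a * c) • fderiv ℝ g (c • x) := by
  have hmul : fderiv ℝ (fun y => a * g (c • y)) x = a • fderiv ℝ (fun y => g (c • y)) x :=
    congrFun (fderiv_const_smul_field (f := fun y => g (c • y)) a) x
  rw [hmul, fderiv_comp_smul, smul_smul]

theorem lap2_comp_smul (c : ℝ) (g : ℝ² → ℝ) (x : ℝ²) :
    lap2 (fun y => g (c • y)) x = c ^ 2 * lap2 g (c • x) := by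
  have hfirst (y : ℝ²) : fderiv ℝ (fun z => g (c • z)) y = c • fderiv ℝ g (c • y) :=
    fderiv_comp_smul c
  simp only [lap2, hfirst, smul_apply, smul_eq_mul, Finset.mul_sum]
  refine Finset.sum_congr rfl fun i _ => ?_
  rw [fderiv_const_mul_comp_smul c c (fun y => fderiv ℝ g y (EuclideanSpace.single i 1)),
    smul_apply, smul_eq_mul, sq]

theorem radialDeriv_const_mul_comp_smul (a : ℝ) {c : ℝ} (hc : 0 < c) (g : ℝ² → ℝ) (x : ℝ²) :
    radialDeriv (fun y => a * g (c • y)) x = a * c * radialDeriv g (c • x) := by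
  have hunit : ‖c • x‖⁻¹ • c • x = ‖x‖⁻¹ • x := by
    rw [norm_smul, norm_of_nonneg hc.le, smul_smul, mul_inv_rev, inv_mul_cancel_right₀ hc.ne']
  rw [radialDeriv, radialDeriv, fderiv_const_mul_comp_smul, hunit, smul_apply, smul_eq_mul]

theorem radialDeriv_iterate_comp_smul {c : ℝ} (hc : 0 < c) (g : ℝ² → ℝ) (m : ℕ) :
    radialDeriv^[m] (fun y => g (c • y)) = fun y => c ^ m * radialDeriv^[m] g (c • y) := by
  induction m with
  | zero => simp
  | succ m ih =>
    ext x
    rw [iterate_succ_apply', ih, radialDeriv_const_mul_comp_smul _ hc, iterate_succ_apply',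
      pow_succ]

theorem deriv_iterate_const_mul_comp_mul (a c : ℝ) (f : ℝ → ℝ) (j : ℕ) (t : ℝ) :
    deriv^[j] (fun s => a * f (c * s)) t = a * c ^ j * deriv^[j] f (c * t) := by
  induction j generalizing t with
  | zero => simp
  | succ j ih =>
    rw [iterate_succ_apply', funext ih, deriv_const_mul_field, deriv_comp_mul_left, smul_eq_mul,
      ← iterate_succ_apply' deriv]
    ring

variable {ψ : ℝ → ℝ² → ℝ} {T : ℝ}

theorem contDiff_rescale (hψ : ContDiff ℝ ∞ fun q : ℝ × ℝ² => ψ q.1 q.2) (T : ℝ) :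
    ContDiff ℝ ∞ fun q : ℝ × ℝ² => rescale T ψ q.1 q.2 :=
  hψ.comp (by fun_prop : ContDiff ℝ ∞ fun q : ℝ × ℝ² => (T⁻¹ * q.1, T⁻¹ • q.2))

theorem rescale_eq_radialProfile (hrad : ∀ t x, ψ t x = radialProfile ψ t ‖x‖) (T t : ℝ) (x : ℝ²) :
    rescale T ψ t x = radialProfile (rescale T ψ) t ‖x‖ := by
  simp only [rescale, radialProfile]
  rw [hrad, hrad _ (T⁻¹ • polarPt ‖x‖ 0), norm_smul, norm_smul, norm_polarPt, abs_norm]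

theorem solvesWave_rescale (hψ : SolvesWave ψ) (T : ℝ) : SolvesWave (rescale T ψ) := by
  intro t x
  have htime := deriv_iterate_const_mul_comp_mul 1 T⁻¹ (fun s => ψ s (T⁻¹ • x)) 2 t
  simp only [one_mul] at htime
  exact htime.trans
    ((congrArg _ (hψ (T⁻¹ * t) (T⁻¹ • x))).trans (lap2_comp_smul T⁻¹ (ψ (T⁻¹ * t)) x).symm)

theorem compactData_rescale {R : ℝ} (hsupp : ∀ t x, |t| + R ≤ ‖x‖ → ψ t x = 0) (hT : 0 < T) :
    CompactData (rescale T ψ) := by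
  refine ⟨Metric.closedBall 0 (T * R), isCompact_closedBall 0 _, fun x hx => ?_⟩
  rw [mem_closedBall_zero_iff, not_le, ← lt_inv_mul_iff₀ hT] at hx
  have hnear : ∀ᶠ t : ℝ in 𝓝 0, |T⁻¹ * t| + R < T⁻¹ * ‖x‖ :=
    (by fun_prop : Continuous fun t : ℝ => |T⁻¹ * t| + R).continuousAt.eventually_lt_const
      (by simpa)
  have hzero : (fun t => rescale T ψ t x) =ᶠ[𝓝 0] 0 := hnear.mono fun t ht =>
    hsupp _ _ (by rw [norm_smul, norm_inv, norm_of_nonneg hT.le]; exact ht.le)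
  exact ⟨hzero.eq_of_nhds, deriv_iterate_eq_zero hzero 1⟩

theorem initialDeriv_rescale (hT : 0 < T) (j m : ℕ) (x : ℝ²) :
    initialDeriv (rescale T ψ) j m x = T⁻¹ ^ (j + m) * initialDeriv ψ j m (T⁻¹ • x) := by
  have hslice (t : ℝ) : radialDeriv^[m] (rescale T ψ t) x =
      T⁻¹ ^ m * radialDeriv^[m] (ψ (T⁻¹ * t)) (T⁻¹ • x) :=
    congrFun (radialDeriv_iterate_comp_smul (inv_pos.2 hT) (ψ (T⁻¹ * t)) m) x
  have htime := deriv_iterate_const_mul_comp_mul (T⁻¹ ^ m) T⁻¹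
    (fun s => radialDeriv^[m] (ψ s) (T⁻¹ • x)) j 0
  simp only [initialDeriv, hslice]
  rw [htime, mul_zero]
  ring

theorem integral_comp_inv_smul_plane (hT : 0 ≤ T) (g : ℝ² → ℝ) :
    ∫ x, g (T⁻¹ • x) = T ^ 2 * ∫ x, g x := by
  simp [Measure.integral_comp_inv_smul_of_nonneg volume g hT]

theorem integral_energy_rescale (hT : 0 < T) :
    ∫ x : ℝ², (deriv (fun t => rescale T ψ t x) 0 ^ 2 + ‖fderiv ℝ (rescale T ψ 0) x‖ ^ 2) =
      ∫ x : ℝ², (deriv (fun t => ψ t x) 0 ^ 2 + ‖fderiv ℝ (ψ 0) x‖ ^ 2) := by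
  have hscale (x : ℝ²) :
      deriv (fun t => rescale T ψ t x) 0 ^ 2 + ‖fderiv ℝ (rescale T ψ 0) x‖ ^ 2 =
        (T ^ 2)⁻¹ * (deriv (fun t => ψ t (T⁻¹ • x)) 0 ^ 2 + ‖fderiv ℝ (ψ 0) (T⁻¹ • x)‖ ^ 2) := by
    have htime := deriv_comp_mul_left T⁻¹ (fun s => ψ s (T⁻¹ • x)) 0
    have hspace := fderiv_comp_smul (f := ψ 0) (x := x) T⁻¹
    unfold rescale
    rw [mul_zero] at htime ⊢
    rw [htime, hspace, norm_smul, norm_inv, norm_of_nonneg hT.le, smul_eq_mul]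
    ring
  simp only [hscale, integral_const_mul]
  rw [integral_comp_inv_smul_plane hT.le
    fun x => deriv (fun t => ψ t x) 0 ^ 2 + ‖fderiv ℝ (ψ 0) x‖ ^ 2,
    inv_mul_cancel_left₀ (by positivity)]

theorem integral_rpow_mul_sq_initialDeriv_le (hψ : ContDiff ℝ ∞ fun q : ℝ × ℝ² => ψ q.1 q.2)
    (hrad : ∀ t x, ψ t x = radialProfile ψ t ‖x‖) {R : ℝ} (hR : 0 ≤ R)
    (hsupp : ∀ t x, |t| + R ≤ ‖x‖ → ψ t x = 0) (hT : 1 ≤ T) {p : ℝ} (hp : 0 ≤ p) (j m : ℕ) :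
    ∫ x, (1 + T * ‖x‖) ^ p * initialDeriv ψ j m x ^ 2 ≤
      ((1 + R) * T) ^ p * ∫ x, initialDeriv ψ j m x ^ 2 := by
  have hT₀ : 0 < T := by positivity
  rw [← integral_const_mul]
  refine integral_mono_of_nonneg (ae_of_all _ fun x => by positivity)
    ((integrable_sq_initialDeriv hψ hrad hsupp j m).const_mul _) (ae_of_all _ fun x => ?_)
  rcases le_or_gt ‖x‖ R with hx | hx
  · have hweight : 1 + T * ‖x‖ ≤ (1 + R) * T := by
      linarith [mul_le_mul_of_nonneg_left hx hT₀.le]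
    exact mul_le_mul_of_nonneg_right (rpow_le_rpow (by positivity) hweight hp) (sq_nonneg _)
  · simp [initialDeriv_eq_zero hψ hrad hR hsupp j m hx]

theorem rpow_mul_integral_sq_initialDeriv_rescale_le
    (hψ : ContDiff ℝ ∞ fun q : ℝ × ℝ² => ψ q.1 q.2)
    (hrad : ∀ t x, ψ t x = radialProfile ψ t ‖x‖) {R : ℝ} (hR : 0 ≤ R)
    (hsupp : ∀ t x, |t| + R ≤ ‖x‖ → ψ t x = 0) (hT : 1 ≤ T) {p : ℝ} (hp : 0 ≤ p) (j m : ℕ) :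
    T ^ (2 * ((j + m : ℕ) : ℝ) - 1 - p) *
        ∫ x, (1 + ‖x‖) ^ p * initialDeriv (rescale T ψ) j m x ^ 2 ≤
      (1 + R) ^ p * T * ∫ x, initialDeriv ψ j m x ^ 2 := by
  have hT₀ : 0 < T := by positivity
  have hscale (x : ℝ²) : (1 + ‖x‖) ^ p * initialDeriv (rescale T ψ) j m x ^ 2 =
      (T ^ (2 * (j + m)))⁻¹ *
        ((1 + T * ‖T⁻¹ • x‖) ^ p * initialDeriv ψ j m (T⁻¹ • x) ^ 2) := by
    rw [initialDeriv_rescale hT₀, norm_smul, norm_inv, norm_of_nonneg hT₀.le,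
      mul_inv_cancel_left₀ hT₀.ne', inv_pow, pow_mul']
    ring
  have hpow :
      T ^ (2 * ((j + m : ℕ) : ℝ) - 1 - p) * ((T ^ (2 * (j + m)))⁻¹ * T ^ 2) * T ^ p = T := by
    rw [rpow_sub hT₀, rpow_sub hT₀, rpow_one, ← rpow_natCast T (2 * (j + m))]
    push_cast
    field_simp
  simp only [hscale, integral_const_mul]
  rw [integral_comp_inv_smul_plane hT₀.le
    fun x => (1 + T * ‖x‖) ^ p * initialDeriv ψ j m x ^ 2]
  calc _ = T ^ (2 * ((j + m : ℕ) : ℝ) - 1 - p) * ((T ^ (2 * (j + m)))⁻¹ * T ^ 2) *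
        ∫ x, (1 + T * ‖x‖) ^ p * initialDeriv ψ j m x ^ 2 := by ring
    _ ≤ T ^ (2 * ((j + m : ℕ) : ℝ) - 1 - p) * ((T ^ (2 * (j + m)))⁻¹ * T ^ 2) *
        (((1 + R) * T) ^ p * ∫ x, initialDeriv ψ j m x ^ 2) :=
      mul_le_mul_of_nonneg_left
        (integral_rpow_mul_sq_initialDeriv_le hψ hrad hR hsupp hT hp j m) (by positivity)
    _ = (1 + R) ^ p * T * ∫ x, initialDeriv ψ j m x ^ 2 := by
      rw [mul_rpow (by positivity) hT₀.le]
      linear_combination (1 + R) ^ p * (∫ x, initialDeriv ψ j m x ^ 2) * hpow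

end Rescaling

section LocalEnergy

/-- The local energy `∫₀^{2π} ∫₀^1 ψ(t, r, θ)² dr dθ` of `ψ` at time `t`. -/
def localEnergy (ψ : ℝ → ℝ² → ℝ) (t : ℝ) : ℝ :=
  ∫ θ in Ioo (0 : ℝ) (2 * π), ∫ r in Ioc (0 : ℝ) 1, ψ t (polarPt r θ) ^ 2

theorem localEnergy_nonneg (ψ : ℝ → ℝ² → ℝ) (t : ℝ) : 0 ≤ localEnergy ψ t :=
  integral_nonneg fun _ => integral_nonneg fun _ => sq_nonneg _

theorem localEnergy_le {ψ : ℝ → ℝ² → ℝ} {t M : ℝ} (hM : ∀ x, ‖x‖ ≤ 1 → |ψ t x| ≤ M) :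
    localEnergy ψ t ≤ 2 * π * M ^ 2 := by
  have hsq (θ : ℝ) : ∀ r ∈ Ioc (0 : ℝ) 1, ‖ψ t (polarPt r θ) ^ 2‖ ≤ M ^ 2 := fun r hr => by
    rw [norm_pow, norm_eq_abs]
    exact pow_le_pow_left₀ (abs_nonneg _)
      (hM _ (by rw [norm_polarPt, abs_of_pos hr.1]; exact hr.2)) 2
  have hθ (θ : ℝ) : ‖∫ r in Ioc (0 : ℝ) 1, ψ t (polarPt r θ) ^ 2‖ ≤ M ^ 2 := by
    simpa using norm_setIntegral_le_of_norm_le_const (μ := volume) measure_Ioc_lt_top (hsq θ)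
  calc localEnergy ψ t ≤ ‖localEnergy ψ t‖ := le_norm_self _
    _ ≤ M ^ 2 * volume.real (Ioo (0 : ℝ) (2 * π)) :=
      norm_setIntegral_le_of_norm_le_const measure_Ioo_lt_top fun θ _ => hθ θ
    _ = 2 * π * M ^ 2 := by rw [volume_real_Ioo_of_le two_pi_pos.le]; ring

theorem localEnergy_eq_of_const {ψ : ℝ → ℝ² → ℝ} {t a : ℝ} (ha : ∀ x, ‖x‖ ≤ 1 → ψ t x = a) :
    localEnergy ψ t = 2 * π * a ^ 2 := by
  have hr (θ : ℝ) : ∫ r in Ioc (0 : ℝ) 1, ψ t (polarPt r θ) ^ 2 = a ^ 2 := by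
    have hconst : ∀ r ∈ Ioc (0 : ℝ) 1, ψ t (polarPt r θ) ^ 2 = a ^ 2 := fun r hr => by
      rw [ha _ (by rw [norm_polarPt, abs_of_pos hr.1]; exact hr.2)]
    simp [setIntegral_congr_fun measurableSet_Ioc hconst]
  simp [localEnergy, hr, pi_nonneg]

variable {ψ : ℝ → ℝ² → ℝ}

theorem continuous_localEnergy (hψ : Continuous fun q : ℝ × ℝ² => ψ q.1 q.2) :
    Continuous (localEnergy ψ) := by
  have hpt : Continuous (uncurry polarPt) := (contDiff_polarPt (n := 0)).continuous
  have hinner : Continuous (uncurry fun t θ => ∫ r in (0 : ℝ)..1, ψ t (polarPt r θ) ^ 2) := by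
    refine intervalIntegral.continuous_parametric_intervalIntegral_of_continuous'
      (f := fun (q : ℝ × ℝ) r => ψ q.1 (polarPt r q.2) ^ 2) ?_ 0 1
    exact (hψ.comp ((by fun_prop : Continuous fun q : (ℝ × ℝ) × ℝ => q.1.1).prodMk
      (hpt.comp (by fun_prop : Continuous fun q : (ℝ × ℝ) × ℝ => (q.2, q.1.2))))).pow 2
  have hIoc : localEnergy ψ =
      fun t => ∫ θ in (0 : ℝ)..(2 * π), ∫ r in (0 : ℝ)..1, ψ t (polarPt r θ) ^ 2 := by
    ext t
    rw [localEnergy, ← integral_Ioc_eq_integral_Ioo, intervalIntegral.integral_of_le two_pi_pos.le]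
    simp only [intervalIntegral.integral_of_le zero_le_one]
  rw [hIoc]
  exact intervalIntegral.continuous_parametric_intervalIntegral_of_continuous' hinner 0 (2 * π)

theorem integrableOn_localEnergy (hψ : Continuous fun q : ℝ × ℝ² => ψ q.1 q.2) {C t₀ : ℝ}
    (ht₀ : 0 < t₀) (hdecay : ∀ t x, t₀ ≤ t → ‖x‖ ≤ 1 → |ψ t x| ≤ C / t) :
    IntegrableOn (localEnergy ψ) (Ioi 0) := by
  have hcont := continuous_localEnergy hψ
  rw [← Ioc_union_Ioi_eq_Ioi ht₀.le]
  refine IntegrableOn.union hcont.integrableOn_Ioc ?_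
  refine Integrable.mono' ((integrableOn_Ioi_rpow_of_lt (by norm_num : (-2 : ℝ) < -1) ht₀).const_mul
    (2 * π * C ^ 2)) hcont.aestronglyMeasurable ?_
  refine (ae_restrict_iff' measurableSet_Ioi).2 (ae_of_all _ fun t ht => ?_)
  rw [norm_of_nonneg (localEnergy_nonneg ψ t)]
  calc localEnergy ψ t ≤ 2 * π * (C / t) ^ 2 :=
        localEnergy_le fun x hx => hdecay t x (le_of_lt ht) hx
    _ = 2 * π * C ^ 2 * t ^ (-2 : ℝ) := by
      rw [rpow_neg (ht₀.trans ht).le, rpow_two]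
      ring

end LocalEnergy

section ModelWave

/-- A smooth radial cutoff on the plane, equal to `1` on the ball of radius `2` and vanishing
outside the ball of radius `3`. -/
def planeCutoff (x : ℝ²) : ℝ := smoothTransition (5 - ‖x‖ ^ 2)

theorem contDiff_planeCutoff : ContDiff ℝ ∞ planeCutoff :=
  smoothTransition.contDiff.comp (contDiff_const.sub (contDiff_norm_sq ℝ))

theorem planeCutoff_eq_one {x : ℝ²} (hx : ‖x‖ ≤ 2) : planeCutoff x = 1 :=
  smoothTransition.one_of_one_le (by nlinarith [norm_nonneg x])

theorem planeCutoff_eq_zero {x : ℝ²} (hx : 3 ≤ ‖x‖) : planeCutoff x = 0 :=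
  smoothTransition.zero_of_nonpos (by nlinarith)

theorem abs_planeCutoff_le_one (x : ℝ²) : |planeCutoff x| ≤ 1 := by
  rw [planeCutoff, abs_of_nonneg (smoothTransition.nonneg _)]
  exact smoothTransition.le_one _

/-- The wave with initial data `(0, planeCutoff)`, from which the counterexamples are obtained by
rescaling. -/
def modelWave : ℝ → ℝ² → ℝ := poissonSolution planeCutoff

theorem contDiff_modelWave : ContDiff ℝ ∞ fun q : ℝ × ℝ² => modelWave q.1 q.2 :=
  contDiff_poissonSolution contDiff_planeCutoff

theorem modelWave_eq_radialProfile (t : ℝ) (x : ℝ²) :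
    modelWave t x = radialProfile modelWave t ‖x‖ :=
  poissonSolution_radial contDiff_planeCutoff.continuous
    (H := fun r => smoothTransition (5 - r ^ 2)) (fun _ => rfl) t x

theorem solvesWave_modelWave : SolvesWave modelWave :=
  solvesWave_poissonSolution contDiff_planeCutoff

theorem modelWave_eq_zero (t : ℝ) (x : ℝ²) (htx : |t| + 3 ≤ ‖x‖) : modelWave t x = 0 :=
  poissonSolution_eq_zero (fun _ => planeCutoff_eq_zero) htx

theorem modelWave_eq_self {t : ℝ} {x : ℝ²} (htx : |t| + ‖x‖ ≤ 2) : modelWave t x = t :=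
  poissonSolution_eq_self (fun _ => planeCutoff_eq_one) htx

theorem abs_modelWave_le {t : ℝ} {x : ℝ²} (ht : 4 ≤ t) (hx : ‖x‖ ≤ 1) :
    |modelWave t x| ≤ 8 * π / t := by
  calc |modelWave t x| ≤ π * 1 * (3 + ‖x‖) ^ 2 / (2 * t) :=
        abs_poissonSolution_le (fun _ => planeCutoff_eq_zero) abs_planeCutoff_le_one
          (by positivity) (by linarith)
    _ ≤ π * 1 * (3 + 1) ^ 2 / (2 * t) := div_le_div_of_nonneg_right (by gcongr) (by linarith)
    _ = 8 * π / t := by ring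

variable {T : ℝ}

theorem integral_localEnergy_rescale_modelWave (hT : 1 ≤ T) :
    ∫ t in Ioc 0 T, localEnergy (rescale T modelWave) t = 2 * π / 3 * T := by
  have hT₀ : 0 < T := by positivity
  have hlinear : ∀ t ∈ Ioc 0 T, localEnergy (rescale T modelWave) t = 2 * π * (T⁻¹ * t) ^ 2 := by
    refine fun t ht => localEnergy_eq_of_const fun x hx => modelWave_eq_self ?_
    have htT : T⁻¹ * t ≤ 1 := by rw [inv_mul_le_iff₀ hT₀, mul_one]; exact ht.2
    rw [abs_of_pos (mul_pos (inv_pos.2 hT₀) ht.1)]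
    linarith [norm_inv_smul_le_one hT hx]
  rw [setIntegral_congr_fun measurableSet_Ioc hlinear, ← intervalIntegral.integral_of_le hT₀.le]
  simp only [mul_pow, intervalIntegral.integral_const_mul, integral_pow]
  field_simp
  norm_num

theorem integrableOn_localEnergy_rescale_modelWave (hT : 1 ≤ T) :
    IntegrableOn (localEnergy (rescale T modelWave)) (Ioi 0) := by
  have hT₀ : 0 < T := by positivity
  refine integrableOn_localEnergy (C := 8 * π * T) (t₀ := T * 4)
    (contDiff_rescale contDiff_modelWave T).continuous (by positivity) fun t x ht hx => ?_
  have hbound := abs_modelWave_le ((le_inv_mul_iff₀ hT₀).2 ht) (norm_inv_smul_le_one hT hx)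
  rwa [← div_div, div_inv_eq_mul] at hbound

end ModelWave

theorem exists_mul_rpow_mul_sum_integral_le (k : ℕ) (P : ℝ) :
    ∃ c > (0 : ℝ), ∀ T : ℝ, 1 ≤ T → ∀ p : ℝ, 0 ≤ p → p ≤ P →
      c * T ^ (2 * (k : ℝ) - 1 - p) * (∑ j ∈ Finset.range (k + 1),
        ∫ x : ℝ², (1 + ‖x‖) ^ p * initialDeriv (rescale T modelWave) j (k - j) x ^ 2) ≤
      ∫ t in Ioc 0 T, localEnergy (rescale T modelWave) t := by
  set N := ∑ j ∈ Finset.range (k + 1), ∫ x : ℝ², initialDeriv modelWave j (k - j) x ^ 2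
  have hN : 0 < 4 ^ P * N + 1 := add_pos_of_nonneg_of_pos (mul_nonneg (by positivity)
    (Finset.sum_nonneg fun j _ => integral_nonneg fun x => sq_nonneg _)) one_pos
  refine ⟨2 * π / 3 / (4 ^ P * N + 1), div_pos (by positivity) hN, fun T hT p hp hpP => ?_⟩
  have hT₀ : 0 < T := by positivity
  have hdata : T ^ (2 * (k : ℝ) - 1 - p) * ∑ j ∈ Finset.range (k + 1),
      ∫ x : ℝ², (1 + ‖x‖) ^ p * initialDeriv (rescale T modelWave) j (k - j) x ^ 2 ≤
      4 ^ P * T * N := by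
    rw [Finset.mul_sum, Finset.mul_sum]
    refine Finset.sum_le_sum fun j hj => ?_
    have hj' := rpow_mul_integral_sq_initialDeriv_rescale_le contDiff_modelWave
      modelWave_eq_radialProfile (by norm_num) modelWave_eq_zero hT hp j (k - j)
    rw [Nat.add_sub_cancel' (Finset.mem_range_succ_iff.1 hj)] at hj'
    refine hj'.trans (mul_le_mul_of_nonneg_right (mul_le_mul_of_nonneg_right ?_ hT₀.le)
      (integral_nonneg fun x => sq_nonneg _))
    rw [show (1 : ℝ) + 3 = 4 by norm_num]
    exact rpow_le_rpow_of_exponent_le (by norm_num) hpP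
  rw [integral_localEnergy_rescale_modelWave hT, mul_assoc, div_mul_eq_mul_div,
    div_le_iff₀ hN, mul_assoc (2 * π / 3)]
  refine mul_le_mul_of_nonneg_left (hdata.trans ?_) (by positivity)
  linarith

theorem exists_mul_energy_lt_integral_localEnergy (C : ℝ) :
    ∃ T : ℝ, 1 ≤ T ∧
      C * ∫ x : ℝ², (deriv (fun t => rescale T modelWave t x) 0 ^ 2 +
        ‖fderiv ℝ (rescale T modelWave 0) x‖ ^ 2) <
      ∫ t in Ioi 0, localEnergy (rescale T modelWave) t := by
  set E := ∫ x : ℝ², (deriv (fun t => modelWave t x) 0 ^ 2 + ‖fderiv ℝ (modelWave 0) x‖ ^ 2)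
    with hE
  refine ⟨max 1 (C * E), le_max_left _ _, ?_⟩
  set T := max 1 (C * E)
  have hT : 1 ≤ T := le_max_left _ _
  rw [integral_energy_rescale (by positivity), ← hE]
  calc C * E ≤ T := le_max_right _ _
    _ < 2 * π / 3 * T := by nlinarith [pi_gt_three]
    _ = ∫ t in Ioc 0 T, localEnergy (rescale T modelWave) t :=
      (integral_localEnergy_rescale_modelWave hT).symm
    _ ≤ ∫ t in Ioi 0, localEnergy (rescale T modelWave) t :=
      setIntegral_mono_set (integrableOn_localEnergy_rescale_modelWave hT)
        (ae_of_all _ (localEnergy_nonneg _)) Ioc_subset_Ioi_self.eventuallyLE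

theorem failure_of_integrated_local_energy_decay_general :
    (∃ φ : ℝ → ℝ → ℝ² → ℝ,
      (∀ T : ℝ, 1 ≤ T →
        ContDiff ℝ ∞ (fun q : ℝ × ℝ² => φ T q.1 q.2)
        ∧ (∃ F : ℝ → ℝ → ℝ, ∀ t : ℝ, ∀ x : ℝ², φ T t x = F t ‖x‖)
        ∧ SolvesWave (φ T) ∧ CompactData (φ T))
      ∧ (∀ (k : ℕ) (P : ℝ), ∃ c > (0 : ℝ), ∀ T : ℝ, 1 ≤ T → ∀ p : ℝ, 0 ≤ p → p ≤ P →
          c * T ^ (2 * (k : ℝ) - 1 - p) *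
            (∑ j ∈ Finset.range (k + 1),
              ∫ x : ℝ², (1 + ‖x‖) ^ p *
                (deriv^[j] (fun t => radialDeriv^[k - j] (φ T t) x) 0) ^ 2)
          ≤ ∫ t in Ioc (0 : ℝ) T, ∫ θ in Ioo (0 : ℝ) (2 * π),
              ∫ r in Ioc (0 : ℝ) 1, (φ T t (polarPt r θ)) ^ 2))
    ∧ ¬ ∃ C : ℝ, ∀ ψ : ℝ → ℝ² → ℝ,
        ContDiff ℝ ∞ (fun q : ℝ × ℝ² => ψ q.1 q.2) →
        (∃ F : ℝ → ℝ → ℝ, ∀ t : ℝ, ∀ x : ℝ², ψ t x = F t ‖x‖) →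
        SolvesWave ψ → CompactData ψ →
        (∫ t in Ioi (0 : ℝ), ∫ θ in Ioo (0 : ℝ) (2 * π),
            ∫ r in Ioc (0 : ℝ) 1, (ψ t (polarPt r θ)) ^ 2)
          ≤ C * ∫ x : ℝ², ((deriv (fun s => ψ s x) 0) ^ 2 + ‖fderiv ℝ (ψ 0) x‖ ^ 2) := by
  have hsmooth := contDiff_rescale contDiff_modelWave
  have hradial (T : ℝ) : ∃ F : ℝ → ℝ → ℝ, ∀ t x, rescale T modelWave t x = F t ‖x‖ :=
    ⟨_, rescale_eq_radialProfile modelWave_eq_radialProfile T⟩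
  have hwave := solvesWave_rescale solvesWave_modelWave
  have hdata {T : ℝ} (hT : 1 ≤ T) : CompactData (rescale T modelWave) :=
    compactData_rescale modelWave_eq_zero (zero_lt_one.trans_le hT)
  refine ⟨⟨fun T => rescale T modelWave, fun T hT => ⟨hsmooth T, hradial T, hwave T, hdata hT⟩,
    exists_mul_rpow_mul_sum_integral_le⟩, ?_⟩
  rintro ⟨C, hC⟩
  obtain ⟨T, hT, hlt⟩ := exists_mul_energy_lt_integral_localEnergy C
  exact hlt.not_ge (hC _ (hsmooth T) (hradial T) (hwave T) (hdata hT))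

/-- Failure of uniform integrated local energy decay for radially symmetric waves in two
space dimensions: for each `T ≥ 1` there is a smooth radially symmetric solution `φ_T` of the
wave equation with compactly supported data whose local spacetime `L²` norm on `[0,T]`
dominates `T^{2k−1−p}` times any `r^p`-weighted `k`-th order data norm.  In particular no
uniform integrated local energy decay estimate holds. -/
theorem failure_of_integrated_local_energy_decay :
    (∃ φ : ℝ → ℝ → EuclideanSpace ℝ (Fin 2) → ℝ,
      (∀ T : ℝ, 1 ≤ T →
        ContDiff ℝ (⊤ : ℕ∞) (fun q : ℝ × EuclideanSpace ℝ (Fin 2) => φ T q.1 q.2)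
        ∧ (∃ F : ℝ → ℝ → ℝ, ∀ t : ℝ, ∀ x : EuclideanSpace ℝ (Fin 2), φ T t x = F t ‖x‖)
        ∧ SolvesWave (φ T) ∧ CompactData (φ T))
      ∧ (∀ k : ℕ, 1 ≤ k → ∃ c > (0:ℝ), ∀ T : ℝ, 1 ≤ T → ∀ p : ℝ, 0 ≤ p → p < 1 →
          c * T ^ (2 * (k : ℝ) - 1 - p) *
            (∑ j ∈ Finset.range (k + 1),
              ∫ x : EuclideanSpace ℝ (Fin 2),
                (1 + ‖x‖) ^ p * (deriv^[j] (fun t => radialDeriv^[k - j] (φ T t) x) 0) ^ 2)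
          ≤ ∫ t in Set.Ioc (0:ℝ) T, ∫ θ in Set.Ioo (0:ℝ) (2 * π),
              ∫ r in Set.Ioc (0:ℝ) 1, (φ T t (polarPt r θ)) ^ 2))
    ∧ ¬ ∃ C > (0:ℝ), ∀ ψ : ℝ → EuclideanSpace ℝ (Fin 2) → ℝ,
        ContDiff ℝ (⊤ : ℕ∞) (fun q : ℝ × EuclideanSpace ℝ (Fin 2) => ψ q.1 q.2) →
        SolvesWave ψ → CompactData ψ →
        (∫ t in Set.Ioi (0:ℝ), ∫ θ in Set.Ioo (0:ℝ) (2 * π),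
            ∫ r in Set.Ioc (0:ℝ) 1, (ψ t (polarPt r θ)) ^ 2)
          ≤ C * ∫ x : EuclideanSpace ℝ (Fin 2),
              ((deriv (fun s => ψ s x) 0) ^ 2 + ‖fderiv ℝ (ψ 0) x‖ ^ 2) := by
  obtain ⟨⟨φ, hφ, hbound⟩, hfail⟩ := failure_of_integrated_local_energy_decay_general
  refine ⟨⟨φ, hφ, fun k _ => ?_⟩, fun ⟨C, _, hC⟩ => hfail ⟨C, fun ψ h₁ _ => hC ψ h₁⟩⟩
  obtain ⟨c, hc, hle⟩ := hbound k 1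
  exact ⟨c, hc, fun T hT p hp hp₁ => hle T hT p hp hp₁.le⟩
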